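/- Let p ∈ (1;2) and α ∈ (p−1; 1). There exists a constant C > 0 depending only on p and α such that the following holds. Let a < b, y₀ ∈ ℝ, let x : [a;b] → ℝ be continuous with finite p-variation, let F : ℝ → ℝ satisfy |F(u) − F(v)| ≤ K·|u − v|^α for all u, v ∈ ℝ with K ≥ 0, and let f : [a;b] → ℝ have finite p-variation. Then for every t ∈ [a;b] the Riemann–Stieltjes integral ∫_a^t F(f(s)) dx(s) exists, the function Tf : [a;b] → ℝ, Tf(t) := y₀ + ∫_a^t F(f(s)) dx(s), has finite p-variation, and |Tf(a)| + ‖Tf‖_{p-var,[a;b]} ≤ C·K·‖x‖_{p-var,[a;b]}·( |f(a)| + ‖f‖_{p-var,[a;b]} )^α + |y₀| + |F(0)|·‖x‖_{p-var,[a;b]}. -/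

import Mathlib

open Filter Set

/-- Truncated variation of `f` on `[a;b]` with truncation parameter `δ`. -/
noncomputable def truncVar (f : ℝ → ℝ) (δ a b : ℝ) : ENNReal :=
  ⨆ (n : ℕ) (t : Fin (n + 1) → ℝ) (_ : StrictMono t)
    (_ : ∀ i, t i ∈ Set.Icc a b),
    ∑ i : Fin n, ENNReal.ofReal (|f (t i.succ) - f (t i.castSucc)| - δ)

/-- p-variation of `f` on `[a;b]`. -/
noncomputable def pVar (f : ℝ → ℝ) (p a b : ℝ) : ENNReal :=
  ⨆ (n : ℕ) (t : Fin (n + 1) → ℝ) (_ : StrictMono t)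
    (_ : ∀ i, t i ∈ Set.Icc a b),
    ∑ i : Fin n, ENNReal.ofReal (|f (t i.succ) - f (t i.castSucc)| ^ p)

/-- The p-variation norm `(V^p(f,[a;b]))^{1/p}`. -/
noncomputable def pVarNorm (f : ℝ → ℝ) (p a b : ℝ) : ℝ :=
  (pVar f p a b).toReal ^ (1 / p)

/-- Oscillation norm `sup_{a ≤ s < t ≤ b} |f t - f s|`. -/
noncomputable def oscNorm (f : ℝ → ℝ) (a b : ℝ) : ℝ :=
  sSup {x | ∃ s ∈ Set.Icc a b, ∃ t ∈ Set.Icc a b, s < t ∧ x = |f t - f s|}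

/-- Sup norm `sup_{a ≤ t ≤ b} |f t|`. -/
noncomputable def supNorm (f : ℝ → ℝ) (a b : ℝ) : ℝ :=
  sSup {x | ∃ t ∈ Set.Icc a b, x = |f t|}

/-- `I` is the Riemann–Stieltjes integral `∫_a^b f dg`. -/
def RSIntegral (f g : ℝ → ℝ) (a b : ℝ) (I : ℝ) : Prop :=
  ∀ ε > (0 : ℝ), ∃ δ > (0 : ℝ), ∀ (n : ℕ) (t : Fin (n + 1) → ℝ) (ξ : Fin n → ℝ),
    StrictMono t → t 0 = a → t (Fin.last n) = b →
    (∀ i : Fin n, t i.castSucc ≤ ξ i ∧ ξ i ≤ t i.succ) →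
    (∀ i : Fin n, t i.succ - t i.castSucc < δ) →
    |∑ i : Fin n, f (ξ i) * (g (t i.succ) - g (t i.castSucc)) - I| < ε

/-- `f` is regulated on `[a;b]`: all the relevant one-sided limits exist and are finite. -/
def Regulated (f : ℝ → ℝ) (a b : ℝ) : Prop :=
  (∃ L : ℝ, Tendsto f (nhdsWithin a (Set.Ioi a)) (nhds L)) ∧
  (∃ L : ℝ, Tendsto f (nhdsWithin b (Set.Iio b)) (nhds L)) ∧
  ∀ x ∈ Set.Ioo a b,
    (∃ L : ℝ, Tendsto f (nhdsWithin x (Set.Iio x)) (nhds L)) ∧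
    (∃ L : ℝ, Tendsto f (nhdsWithin x (Set.Ioi x)) (nhds L))

/-- `f` and `g` have no common points of discontinuity on `[a;b]`. -/
def NoCommonDiscont (f g : ℝ → ℝ) (a b : ℝ) : Prop :=
  ∀ x ∈ Set.Icc a b,
    ContinuousWithinAt f (Set.Icc a b) x ∨ ContinuousWithinAt g (Set.Icc a b) x

/-- superadditive control -/
structure IsCtrl (W : ℝ → ℝ → ℝ) (a b : ℝ) : Prop where
  nonneg : ∀ s t, a ≤ s → s ≤ t → t ≤ b → 0 ≤ W s t
  sup : ∀ s u t, a ≤ s → s ≤ u → u ≤ t → t ≤ b → W s u + W u t ≤ W s t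

lemma IsCtrl.mono {W : ℝ → ℝ → ℝ} {a b : ℝ} (h : IsCtrl W a b) {s s' t' t : ℝ}
    (h1 : a ≤ s) (h2 : s ≤ s') (h3 : s' ≤ t') (h4 : t' ≤ t) (h5 : t ≤ b) : W s' t' ≤ W s t := by
  have e1 := h.sup s s' t h1 h2 (h3.trans h4) h5
  have e2 := h.sup s' t' t (h1.trans h2) h3 h4 h5
  have e3 := h.nonneg s s' h1 h2 (by linarith)
  have e4 := h.nonneg t' t (by linarith) h4 h5
  linarith

lemma IsCtrl.restrict {W : ℝ → ℝ → ℝ} {a b a' b' : ℝ} (h : IsCtrl W a b) (ha : a ≤ a')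
    (hb : b' ≤ b) : IsCtrl W a' b' :=
  ⟨fun s t h1 h2 h3 => h.nonneg s t (ha.trans h1) h2 (h3.trans hb),
   fun s u t h1 h2 h3 h4 => h.sup s u t (ha.trans h1) h2 h3 (h4.trans hb)⟩

lemma IsCtrl.diag {W : ℝ → ℝ → ℝ} {a b : ℝ} (h : IsCtrl W a b) {s : ℝ}
    (h1 : a ≤ s) (h5 : s ≤ b) : W s s = 0 := by
  have e1 := h.sup s s s h1 le_rfl le_rfl h5
  have e3 := h.nonneg s s h1 le_rfl h5
  linarith

lemma IsCtrl.sum_le {W : ℝ → ℝ → ℝ} {a b : ℝ} (h : IsCtrl W a b) :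
    ∀ (n : ℕ) (t : Fin (n + 1) → ℝ), Monotone t → (∀ i, t i ∈ Set.Icc a b) →
    ∑ i : Fin n, W (t i.castSucc) (t i.succ) ≤ W (t 0) (t (Fin.last n)) := by
  intro n
  induction n with
  | zero =>
    intro t _ hI
    simpa using h.nonneg _ _ (hI 0).1 le_rfl (hI 0).2
  | succ n ih =>
    intro t ht hI
    rw [Fin.sum_univ_castSucc]
    have := ih (fun i => t i.castSucc) (fun i j hij => ht (by simpa using hij)) (fun i => hI _)
    have h2 := h.sup (t 0) (t (Fin.last n).castSucc) (t (Fin.last (n+1))) (hI _).1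
      (ht (Fin.zero_le _)) (ht (Fin.le_last _)) (hI _).2
    simp only [Fin.castSucc_zero] at this
    simp only [Fin.succ_last, Fin.succ_castSucc] at this ⊢
    linarith

lemma two_holder {A B C D l : ℝ} (hA : 0 ≤ A) (hB : 0 ≤ B) (hC : 0 ≤ C) (hD : 0 ≤ D)
    (hl : 0 < l) (hl1 : l < 1) :
    A ^ l * B ^ (1 - l) + C ^ l * D ^ (1 - l) ≤ (A + C) ^ l * (B + D) ^ (1 - l) := by
  have h1l : 0 < 1 - l := by linarith
  have hc : (1 / l).HolderConjugate (1 / (1 - l)) := by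
    rw [Real.holderConjugate_iff]
    refine ⟨by rw [lt_div_iff₀ hl]; linarith, by simp⟩
  have := Real.inner_le_Lp_mul_Lq (Finset.univ : Finset (Fin 2)) ![A ^ l, C ^ l]
    ![B ^ (1 - l), D ^ (1 - l)] hc
  simp only [Fin.sum_univ_two, Matrix.cons_val_zero, Matrix.cons_val_one, one_div, inv_inv] at this
  rw [abs_of_nonneg (by positivity), abs_of_nonneg (by positivity), abs_of_nonneg (by positivity),
    abs_of_nonneg (by positivity), Real.rpow_rpow_inv hA hl.ne', Real.rpow_rpow_inv hC hl.ne',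
    Real.rpow_rpow_inv hB h1l.ne', Real.rpow_rpow_inv hD h1l.ne'] at this
  exact this

lemma IsCtrl.mul {U V : ℝ → ℝ → ℝ} {a b : ℝ} (hU : IsCtrl U a b) (hV : IsCtrl V a b)
    {l : ℝ} (hl : 0 < l) (hl1 : l < 1) :
    IsCtrl (fun s t => U s t ^ l * V s t ^ (1 - l)) a b where
  nonneg s t h1 h2 h3 := by
    have := hU.nonneg s t h1 h2 h3
    have := hV.nonneg s t h1 h2 h3
    positivity
  sup s u t h1 h2 h3 h4 := by
    have a1 := hU.nonneg s u h1 h2 (h3.trans h4)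
    have a2 := hV.nonneg s u h1 h2 (h3.trans h4)
    have a3 := hU.nonneg u t (h1.trans h2) h3 h4
    have a4 := hV.nonneg u t (h1.trans h2) h3 h4
    have a5 := hU.sup s u t h1 h2 h3 h4
    have a6 := hV.sup s u t h1 h2 h3 h4
    have : (0:ℝ) ≤ 1 - l := by linarith
    have a7 : 0 ≤ U s t := by linarith
    refine (two_holder a1 a2 a3 a4 hl hl1).trans ?_
    gcongr

lemma IsCtrl.rpow {U : ℝ → ℝ → ℝ} {a b : ℝ} (hU : IsCtrl U a b)
    {θ : ℝ} (hθ : 1 ≤ θ) : IsCtrl (fun s t => U s t ^ θ) a b where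
  nonneg s t h1 h2 h3 := by
    have := hU.nonneg s t h1 h2 h3
    positivity
  sup s u t h1 h2 h3 h4 := by
    have a1 := hU.nonneg s u h1 h2 (h3.trans h4)
    have a3 := hU.nonneg u t (h1.trans h2) h3 h4
    have a5 := hU.sup s u t h1 h2 h3 h4
    refine (Real.add_rpow_le_rpow_add a1 a3 hθ).trans ?_
    gcongr

lemma young_disc {θ C M : ℝ} (hθ : 1 < θ) (hC : C = 2 / (1 - 2 ^ (1 - θ))) (hM : 0 ≤ M)
    (W : ℕ → ℕ → ℝ) (G X J : ℕ → ℝ) (m n : ℕ)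
    (h0 : ∀ i j, m ≤ i → i ≤ j → j ≤ n → 0 ≤ W i j)
    (hs : ∀ i k j, m ≤ i → i ≤ k → k ≤ j → j ≤ n → W i k + W k j ≤ W i j)
    (hb : ∀ i k j, m ≤ i → i ≤ k → k ≤ j → j ≤ n → |G k - G i| * |X j - X k| ≤ M * W i j ^ θ)
    (hJ : ∀ k, J (k + 1) = J k + G k * (X (k + 1) - X k)) :
    ∀ d i j, j = i + d → m ≤ i → j ≤ n → |J j - J i - G i * (X j - X i)| ≤ C * M * W i j ^ θ := by
  have h2 : (2:ℝ) ^ (1 - θ) < 1 := Real.rpow_lt_one_of_one_lt_of_neg (by norm_num) (by linarith)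
  have hC0 : 0 < C := by rw [hC]; apply div_pos <;> linarith
  have hCe : C * 2 ^ (1 - θ) + 2 = C := by
    rw [hC]; field_simp [show (1 - (2:ℝ) ^ (1 - θ)) ≠ 0 by linarith]; ring
  intro d
  induction d using Nat.strong_induction_on with
  | _ d ih =>
  intro i j hj hi hjn
  have hW : 0 ≤ W i j := h0 i j hi (by omega) hjn
  rcases Nat.eq_zero_or_pos d with hd | hd
  · subst hd
    simp only [add_zero] at hj
    subst hj
    simp only [sub_self, mul_zero, abs_zero]
    positivity
  have hdiag : ∀ k, m ≤ k → k ≤ n → W k k = 0 := fun k h1 h2 => by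
    have := h0 k k h1 le_rfl h2
    have := hs k k k h1 le_rfl le_rfl h2
    linarith
  classical
  set P : ℕ → Prop := fun e => W i (i + e) ≤ W i j / 2 with hP
  set e := Nat.findGreatest P (d - 1) with he
  have hPe : P e := by
    apply Nat.findGreatest_spec (m := 0) (Nat.zero_le _)
    show W i (i+0) ≤ _
    rw [add_zero, hdiag i hi (by omega)]; linarith
  have hed : e ≤ d - 1 := Nat.findGreatest_le _
  have hR : W (i + e + 1) j ≤ W i j / 2 := by
    by_cases h : e + 1 ≤ d - 1
    · have hn : ¬ P (e + 1) := Nat.findGreatest_is_greatest (by omega) h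
      have hn' : W i j / 2 < W i (i + e + 1) := by
        simpa [hP, add_assoc] using hn
      have := hs i (i + e + 1) j hi (by omega) (by omega) hjn
      linarith
    · have : i + e + 1 = j := by omega
      rw [this, hdiag j (by omega) hjn]; linarith
  have i1 := ih e (by omega) i (i + e) rfl hi (by omega)
  have i2 := ih (j - (i + e + 1)) (by omega) (i + e + 1) j (by omega) (by omega) hjn
  have hPe' : W i (i + e) ≤ W i j / 2 := hPe
  have b1 := hb i (i + e) (i + e + 1) hi (by omega) (by omega) (by omega)
  have b2 := hb i (i + e + 1) j hi (by omega) (by omega) hjn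
  have n1 := h0 i (i + e) hi (by omega) (by omega)
  have n2 := h0 (i + e + 1) j (by omega) (by omega) hjn
  have n3 := h0 i (i + e + 1) hi (by omega) (by omega)
  have m1 : W i (i + e + 1) ≤ W i j := by
    have := hs i (i + e + 1) j hi (by omega) (by omega) hjn
    linarith
  have hJ' := hJ (i + e)
  have half : (W i j / 2) ^ θ * 2 = 2 ^ (1 - θ) * W i j ^ θ := by
    rw [Real.div_rpow hW (by norm_num), Real.rpow_sub (by norm_num), Real.rpow_one]; ring
  have i1' : |J (i + e) - J i - G i * (X (i + e) - X i)| ≤ C * M * (W i j / 2) ^ θ :=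
    i1.trans (by gcongr)
  have i2' : |J j - J (i + e + 1) - G (i + e + 1) * (X j - X (i + e + 1))|
      ≤ C * M * (W i j / 2) ^ θ := i2.trans (by gcongr)
  have b1' : |(G (i + e) - G i) * (X (i + e + 1) - X (i + e))| ≤ M * W i j ^ θ := by
    rw [abs_mul]; exact b1.trans (by gcongr)
  have b2' : |(G (i + e + 1) - G i) * (X j - X (i + e + 1))| ≤ M * W i j ^ θ := by
    rw [abs_mul]; exact b2
  have key : J j - J i - G i * (X j - X i) =
      (J (i + e) - J i - G i * (X (i + e) - X i)) +
      (J j - J (i + e + 1) - G (i + e + 1) * (X j - X (i + e + 1))) +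
      (G (i + e) - G i) * (X (i + e + 1) - X (i + e)) +
      (G (i + e + 1) - G i) * (X j - X (i + e + 1)) := by
    rw [hJ']; ring
  rw [key]
  calc _ ≤ C * M * (W i j / 2) ^ θ + C * M * (W i j / 2) ^ θ + M * W i j ^ θ + M * W i j ^ θ :=
        (abs_add_le _ _).trans (add_le_add ((abs_add_le _ _).trans (add_le_add
          ((abs_add_le _ _).trans (add_le_add i1' i2')) b1')) b2')
    _ = C * M * ((W i j / 2) ^ θ * 2) + 2 * M * W i j ^ θ := by ring
    _ = (C * 2 ^ (1 - θ) + 2) * M * W i j ^ θ := by rw [half]; ring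
    _ = _ := by rw [hCe]

/-- uniform bound on left sums -/
def Good (g x : ℝ → ℝ) (s t B : ℝ) : Prop :=
  ∀ (τ J : ℕ → ℝ), Monotone τ →
    (∀ k, J (k + 1) = J k + g (τ k) * (x (τ (k + 1)) - x (τ k))) →
    ∀ i j, i ≤ j → τ i = s → τ j = t → |J j - J i - g s * (x t - x s)| ≤ B

lemma good_of_ctrl {θ C M s t : ℝ} (hθ : 1 < θ) (hC : C = 2 / (1 - 2 ^ (1 - θ))) (hM : 0 ≤ M)
    {W : ℝ → ℝ → ℝ} (hW : IsCtrl W s t) {g x : ℝ → ℝ}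
    (hb : ∀ u v w, s ≤ u → u ≤ v → v ≤ w → w ≤ t →
      |g v - g u| * |x w - x v| ≤ M * W u w ^ θ) :
    Good g x s t (C * M * W s t ^ θ) := by
  intro τ J hτ hJ i j hij hi hj
  have := young_disc hθ hC hM (fun i j => W (τ i) (τ j)) (fun k => g (τ k)) (fun k => x (τ k)) J
    i j
    (fun i' j' h1 h2 h3 => hW.nonneg _ _ (hi ▸ hτ h1) (hτ h2) (hj ▸ hτ h3))
    (fun i' k j' h1 h2 h3 h4 => hW.sup _ _ _ (hi ▸ hτ h1) (hτ h2) (hτ h3) (hj ▸ hτ h4))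
    (fun i' k j' h1 h2 h3 h4 => hb _ _ _ (hi ▸ hτ h1) (hτ h2) (hτ h3) (hj ▸ hτ h4))
    hJ (j - i) i j (by omega) le_rfl le_rfl
  simpa [hi, hj] using this

lemma exists_enum (A : Finset ℝ) : ∃ τ : ℕ → ℝ, Monotone τ ∧ ∀ s ∈ A, ∃ k, τ k = s := by
  rcases Nat.eq_zero_or_pos A.card with h | h
  · refine ⟨fun _ => 0, monotone_const, fun s hs => ?_⟩
    rw [Finset.card_eq_zero] at h
    simp [h] at hs
  · refine ⟨fun k => A.orderEmbOfFin rfl ⟨min k (A.card - 1), by omega⟩, ?_, ?_⟩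
    · intro k l hkl
      apply (A.orderEmbOfFin rfl).monotone
      simp only [Fin.mk_le_mk]
      omega
    · intro s hs
      have : s ∈ Set.range (A.orderEmbOfFin rfl) := by
        rw [Finset.range_orderEmbOfFin]; exact hs
      obtain ⟨k, hk⟩ := this
      refine ⟨k, ?_⟩
      have hk2 := k.2
      have e : (⟨min (k:ℕ) (A.card - 1), by omega⟩ : Fin A.card) = k :=
        Fin.ext (by show min (k:ℕ) (A.card - 1) = k; omega)
      show A.orderEmbOfFin rfl _ = s
      rw [e, hk]

lemma exists_fin_int (g x : ℝ → ℝ) (A : Finset ℝ) : ∃ I : ℝ → ℝ,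
    ∀ s ∈ A, ∀ t ∈ A, s ≤ t → ∀ B, Good g x s t B → |I t - I s - g s * (x t - x s)| ≤ B := by
  obtain ⟨τ, hτ, hs⟩ := exists_enum A
  choose! k hk using hs
  let J : ℕ → ℝ := fun n => ∑ i ∈ Finset.range n, g (τ i) * (x (τ (i + 1)) - x (τ i))
  refine ⟨fun s => J (k s), fun s hs t ht hst B hB => ?_⟩
  refine hB τ J hτ (fun n => Finset.sum_range_succ _ _) (k s) (k t) ?_ (hk s hs) (hk t ht)
  rcases hst.eq_or_lt with h | h
  · rw [h]
  · by_contra! hc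
    have := hτ hc.le
    rw [hk s hs, hk t ht] at this
    linarith

lemma sewing (g x : ℝ → ℝ) (a b : ℝ) (hab : a ≤ b)
    (hG : ∀ t ∈ Set.Icc a b, ∃ B, Good g x a t B) : ∃ I : ℝ → ℝ, I a = 0 ∧
    ∀ s ∈ Set.Icc a b, ∀ t ∈ Set.Icc a b, s ≤ t → ∀ B, Good g x s t B →
      |I t - I s - g s * (x t - x s)| ≤ B := by
  choose IA hIA using exists_fin_int g x
  let 𝒰 : Ultrafilter (Finset ℝ) := Ultrafilter.of atTop
  have hmem : ∀ s : ℝ, ∀ᶠ A in (𝒰 : Filter (Finset ℝ)), s ∈ A := fun s =>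
    Ultrafilter.of_le atTop ((eventually_ge_atTop ({s} : Finset ℝ)).mono
      fun A hA => by simpa using hA)
  have hlim : ∀ t ∈ Set.Icc a b, ∃ L, Tendsto (fun A => IA A t - IA A a) 𝒰 (nhds L) := by
    intro t ht
    obtain ⟨B, hB⟩ := hG t ht
    have hc : IsCompact (Set.Icc (g a * (x t - x a) - B) (g a * (x t - x a) + B)) := isCompact_Icc
    have hev : ∀ᶠ A in (𝒰 : Filter (Finset ℝ)), IA A t - IA A a ∈
        Set.Icc (g a * (x t - x a) - B) (g a * (x t - x a) + B) := by
      filter_upwards [hmem a, hmem t] with A h1 h2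
      have := abs_le.1 (hIA A a h1 t h2 ht.1 B hB)
      constructor <;> linarith [this.1, this.2]
    obtain ⟨L, _, hL⟩ := hc.ultrafilter_le_nhds (𝒰.map (fun A => IA A t - IA A a))
      (by rw [Filter.le_principal_iff]; exact hev)
    exact ⟨L, hL⟩
  choose! L hL using hlim
  refine ⟨L, ?_, ?_⟩
  · have := hL a ⟨le_rfl, hab⟩
    simp only [sub_self] at this
    exact tendsto_nhds_unique this tendsto_const_nhds
  · intro s hs t ht hst B hB
    have h1 := (((hL t ht).sub (hL s hs)).sub_const (g s * (x t - x s))).abs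
    refine le_of_tendsto h1 ?_
    filter_upwards [hmem s, hmem t] with A h2 h3
    have := hIA A s h2 t h3 hst B hB
    refine le_trans (le_of_eq ?_) this
    congr 1
    ring

/-- partition reaching y with sum at least v -/
def Reach (f : ℝ → ℝ) (p a b : ℝ) (v : ENNReal) (y : ℝ) : Prop :=
  ∃ (n : ℕ) (t : Fin (n + 1) → ℝ), StrictMono t ∧ (∀ i, t i ∈ Set.Icc a b) ∧
    t (Fin.last n) = y ∧
    v ≤ ∑ i : Fin n, ENNReal.ofReal (|f (t i.succ) - f (t i.castSucc)| ^ p)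

lemma Reach.le {f : ℝ → ℝ} {p a b : ℝ} {v : ENNReal} {y : ℝ} (h : Reach f p a b v y) :
    v ≤ pVar f p a b := by
  obtain ⟨n, t, h1, h2, _, h4⟩ := h
  exact h4.trans (le_iSup₂_of_le n t (le_iSup₂_of_le h1 h2 le_rfl))

lemma Reach.step {f : ℝ → ℝ} {p a b : ℝ} (hp : 0 < p) {v : ENNReal} {y z : ℝ}
    (h : Reach f p a b v y) (hyz : y ≤ z) (hz : z ≤ b) :
    Reach f p a b (v + ENNReal.ofReal (|f z - f y| ^ p)) z := by
  rcases hyz.eq_or_lt with e | hlt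
  · subst e
    simpa [Real.zero_rpow hp.ne'] using h
  obtain ⟨n, t, h1, h2, h3, h4⟩ := h
  have hya : a ≤ y := h3 ▸ (h2 _).1
  refine ⟨n + 1, Fin.snoc (α := fun _ => ℝ) t z, ?_, ?_, by simp, ?_⟩
  · rw [Fin.strictMono_iff_lt_succ]
    intro i
    refine Fin.lastCases ?_ (fun i => ?_) i
    · simp [h3, hlt]
    · rw [Fin.succ_castSucc]
      simp only [Fin.snoc_castSucc]
      exact h1 Fin.castSucc_lt_succ
  · intro i
    refine Fin.lastCases ?_ (fun i => ?_) i
    · simp only [Fin.snoc_last]; exact ⟨by linarith, hz⟩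
    · simp only [Fin.snoc_castSucc]; exact h2 i
  · rw [Fin.sum_univ_castSucc]
    simp only [Fin.succ_castSucc, Fin.snoc_castSucc, Fin.succ_last, Fin.snoc_last, h3]
    gcongr

lemma Reach.steps {f : ℝ → ℝ} {p a b : ℝ} (hp : 0 < p) {v : ENNReal} :
    ∀ (n : ℕ) (t : Fin (n + 1) → ℝ), Monotone t → (∀ i, t i ≤ b) → Reach f p a b v (t 0) →
    Reach f p a b (v + ∑ i : Fin n, ENNReal.ofReal (|f (t i.succ) - f (t i.castSucc)| ^ p))
      (t (Fin.last n)) := by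
  intro n
  induction n with
  | zero => intro t _ _ h; simpa using h
  | succ n ih =>
    intro t ht hb h
    have := ih (fun i => t i.castSucc) (fun i j hij => ht (by simpa using hij)) (fun i => hb _) h
    have := this.step hp (ht (Fin.le_last _)) (hb (Fin.last (n+1)))
    rw [Fin.sum_univ_castSucc]
    simp only [Fin.succ_last, Fin.succ_castSucc, ← add_assoc] at this ⊢
    exact this

lemma pVar_mono (f : ℝ → ℝ) (p : ℝ) {a b a' b' : ℝ} (ha : a ≤ a') (hb : b' ≤ b) :
    pVar f p a' b' ≤ pVar f p a b := by
  refine iSup₂_le fun n t => iSup₂_le fun h1 h2 => ?_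
  exact le_iSup₂_of_le n t (le_iSup₂_of_le h1
    (fun i => ⟨ha.trans (h2 i).1, (h2 i).2.trans hb⟩) le_rfl)

lemma pVar_superadd (f : ℝ → ℝ) {p s u t : ℝ} (hp : 0 < p) (hsu : s ≤ u) (hut : u ≤ t)
    (hfin : pVar f p s t < ⊤) : pVar f p s u + pVar f p u t ≤ pVar f p s t := by
  have hut' : pVar f p u t ≠ ⊤ := ((pVar_mono f p hsu le_rfl).trans_lt hfin).ne
  suffices pVar f p s u ≤ pVar f p s t - pVar f p u t from
    (add_le_add_left this _).trans (tsub_add_cancel_of_le (pVar_mono f p hsu le_rfl)).le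
  refine iSup₂_le fun n t1 => iSup₂_le fun h1 h2 => ?_
  apply ENNReal.le_sub_of_add_le_right hut'
  have r1 : Reach f p s t (∑ i : Fin n,
      ENNReal.ofReal (|f (t1 i.succ) - f (t1 i.castSucc)| ^ p)) (t1 (Fin.last n)) :=
    ⟨n, t1, h1, fun i => ⟨(h2 i).1, (h2 i).2.trans hut⟩, rfl, le_rfl⟩
  set S := ∑ i : Fin n, ENNReal.ofReal (|f (t1 i.succ) - f (t1 i.castSucc)| ^ p) with hS
  have hSt : S ≠ ⊤ := by simp [hS]
  rw [add_comm]
  suffices pVar f p u t ≤ pVar f p s t - S from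
    (add_le_add_left this _).trans (tsub_add_cancel_of_le r1.le).le
  refine iSup₂_le fun m t2 => iSup₂_le fun h3 h4 => ?_
  apply ENNReal.le_sub_of_add_le_left hSt
  have r2 := r1.step hp (z := t2 0) ((h2 _).2.trans (h4 _).1) (h4 0).2
  have r3 := Reach.steps hp m t2 h3.monotone (fun i => (h4 i).2) r2
  refine le_trans ?_ r3.le
  gcongr
  exact le_self_add

lemma pVar_ctrl (f : ℝ → ℝ) {p a b : ℝ} (hp : 0 < p) (hfin : pVar f p a b < ⊤) :
    IsCtrl (fun s t => (pVar f p s t).toReal) a b where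
  nonneg _ _ _ _ _ := ENNReal.toReal_nonneg
  sup s u t h1 h2 h3 h4 := by
    have hst := (pVar_mono f p h1 h4).trans_lt hfin
    have hsu := (pVar_mono f p le_rfl h3).trans_lt hst
    have hut := (pVar_mono f p h2 le_rfl).trans_lt hst
    rw [← ENNReal.toReal_add hsu.ne hut.ne]
    exact ENNReal.toReal_mono hst.ne (pVar_superadd f hp h2 h3 hst)

lemma pVar_incr (f : ℝ → ℝ) {p a b s u v t : ℝ} (hp : 0 < p) (hfin : pVar f p a b < ⊤)
    (has : a ≤ s) (hsu : s ≤ u) (huv : u ≤ v) (hvt : v ≤ t) (htb : t ≤ b) :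
    |f v - f u| ≤ (pVar f p s t).toReal ^ (1 / p) := by
  have hst := (pVar_mono f p has htb).trans_lt hfin
  have r0 : Reach f p s t 0 u :=
    ⟨0, fun _ => u, fun i j h => absurd h (by have := i.2; have := j.2; rw [Fin.lt_def]; omega), fun _ => ⟨hsu, huv.trans hvt⟩, rfl, by simp⟩
  have := (r0.step hp huv hvt).le
  rw [zero_add, ENNReal.ofReal_le_iff_le_toReal hst.ne] at this
  rw [one_div]
  calc |f v - f u| = (|f v - f u| ^ p) ^ p⁻¹ := (Real.rpow_rpow_inv (abs_nonneg _) hp.ne').symm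
    _ ≤ _ := by gcongr

lemma prod_ctrl {U V : ℝ → ℝ → ℝ} {a b β γ : ℝ} (hU : IsCtrl U a b) (hV : IsCtrl V a b)
    (hβ : 0 < β) (hγ : 0 < γ) : ∃ W, IsCtrl W a b ∧ ∀ s t, a ≤ s → s ≤ t → t ≤ b →
      W s t ^ (β + γ) = U s t ^ β * V s t ^ γ := by
  have hs : 0 < β + γ := by linarith
  refine ⟨_, hU.mul hV (l := β / (β + γ)) (by positivity)
    (by rw [div_lt_one hs]; linarith), ?_⟩
  intro s t h1 h2 h3
  have u := hU.nonneg s t h1 h2 h3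
  have v := hV.nonneg s t h1 h2 h3
  rw [Real.mul_rpow (by positivity) (by positivity), ← Real.rpow_mul u, ← Real.rpow_mul v]
  congr 2 <;> field_simp
  ring

lemma good_prod {C M s t β γ : ℝ} (hβ : 0 < β) (hγ : 0 < γ) (hθ : 1 < β + γ)
    (hC : C = 2 / (1 - 2 ^ (1 - (β + γ)))) (hM : 0 ≤ M)
    {U V : ℝ → ℝ → ℝ} (hst : s ≤ t) (hU : IsCtrl U s t) (hV : IsCtrl V s t) {g x : ℝ → ℝ}
    (hb : ∀ u v w, s ≤ u → u ≤ v → v ≤ w → w ≤ t →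
      |g v - g u| * |x w - x v| ≤ M * (U u w ^ β * V u w ^ γ)) :
    Good g x s t (C * M * (U s t ^ β * V s t ^ γ)) := by
  obtain ⟨W, hW, hWe⟩ := prod_ctrl hU hV hβ hγ
  rw [← hWe s t le_rfl hst le_rfl]
  refine good_of_ctrl hθ hC hM hW fun u v w h1 h2 h3 h4 => ?_
  rw [hWe u w h1 (h2.trans h3) h4]
  exact hb u v w h1 h2 h3 h4

lemma ctrl_prod_pow {U V : ℝ → ℝ → ℝ} {a b β γ : ℝ} (hU : IsCtrl U a b) (hV : IsCtrl V a b)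
    (hβ : 0 < β) (hγ : 0 < γ) (hθ : 1 ≤ β + γ) :
    IsCtrl (fun s t => U s t ^ β * V s t ^ γ) a b := by
  obtain ⟨W, hW, hWe⟩ := prod_ctrl hU hV hβ hγ
  have := hW.rpow hθ
  refine ⟨fun s t h1 h2 h3 => ?_, fun s u t h1 h2 h3 h4 => ?_⟩
  · have := this.nonneg s t h1 h2 h3
    rwa [hWe s t h1 h2 h3] at this
  · have := this.sup s u t h1 h2 h3 h4
    rwa [hWe s t h1 (h2.trans h3) h4, hWe s u h1 h2 (h3.trans h4),
      hWe u t (h1.trans h2) h3 h4] at this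

lemma young_const_pos {θ : ℝ} (hθ : 1 < θ) : 0 < 2 / (1 - (2:ℝ) ^ (1 - θ)) := by
  have h2 : (2:ℝ) ^ (1 - θ) < 1 := Real.rpow_lt_one_of_one_lt_of_neg (by norm_num) (by linarith)
  apply div_pos <;> linarith

lemma exists_small {c D ε : ℝ} (hc : 0 < c) (hε : 0 < ε) : ∃ η > 0, η ^ c * D < ε := by
  have h : Tendsto (fun η : ℝ => η ^ c * D) (nhdsWithin 0 (Set.Ioi 0)) (nhds (0 ^ c * D)) :=
    (((Real.continuousAt_rpow_const 0 c (Or.inr hc.le)).tendsto).mul_const D).mono_left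
      nhdsWithin_le_nhds
  rw [Real.zero_rpow hc.ne', zero_mul] at h
  obtain ⟨η, h1, h2⟩ := ((h.eventually_lt_const hε).and self_mem_nhdsWithin).exists
  exact ⟨η, h2, h1⟩

/-- Bound for the Picard-type operator `Tf(t) = y₀ + ∫_a^t F(f(s)) dx(s)`:
`|Tf(a)| + ‖Tf‖_{p-var} ≤ C·K·‖x‖_{p-var}·(|f(a)| + ‖f‖_{p-var})^α + |y₀| + |F(0)|·‖x‖_{p-var}`. -/
theorem picard_operator_bound
    (p α : ℝ) (hp : 1 < p) (hp2 : p < 2) (hα1 : p - 1 < α) (hα2 : α < 1) :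
    ∃ C : ℝ, 0 < C ∧ ∀ (a b : ℝ), a < b → ∀ y₀ : ℝ, ∀ x : ℝ → ℝ,
      ContinuousOn x (Set.Icc a b) → pVar x p a b < ⊤ →
      ∀ (F : ℝ → ℝ) (K : ℝ), 0 ≤ K → (∀ u v : ℝ, |F u - F v| ≤ K * |u - v| ^ α) →
      ∀ f : ℝ → ℝ, pVar f p a b < ⊤ →
      ∃ Tf : ℝ → ℝ,
        (∀ t ∈ Set.Icc a b, RSIntegral (fun s => F (f s)) x a t (Tf t - y₀)) ∧
        pVar Tf p a b < ⊤ ∧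
        |Tf a| + pVarNorm Tf p a b ≤
          C * K * pVarNorm x p a b * (|f a| + pVarNorm f p a b) ^ α
            + |y₀| + |F 0| * pVarNorm x p a b := by
  have hp0 : 0 < p := by linarith
  have hα0 : 0 < α := by linarith
  have hβ0 : 0 < 1 / p := by positivity
  have hγ0 : 0 < α / p := by positivity
  have hθ : 1 < 1 / p + α / p := by
    rw [← add_div, lt_div_iff₀ hp0]; linarith
  set C₀ : ℝ := 2 / (1 - (2:ℝ) ^ (1 - (1 / p + α / p))) with hC₀
  have hC₀pos : 0 < C₀ := young_const_pos hθ
  refine ⟨C₀ + 1, by linarith, ?_⟩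
  intro a b hab y₀ x hxc hx F K hK hF f hf
  set U : ℝ → ℝ → ℝ := fun s t => (pVar x p s t).toReal with hUdef
  set V : ℝ → ℝ → ℝ := fun s t => (pVar f p s t).toReal with hVdef
  have hU : IsCtrl U a b := pVar_ctrl x hp0 hx
  have hV : IsCtrl V a b := pVar_ctrl f hp0 hf
  set g : ℝ → ℝ := fun s => F (f s) with hg
  -- increments
  have hginc : ∀ s u v t, a ≤ s → s ≤ u → u ≤ v → v ≤ t → t ≤ b →
      |g v - g u| ≤ K * V s t ^ (α / p) := by
    intro s u v t h1 h2 h3 h4 h5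
    refine (hF _ _).trans ?_
    have := pVar_incr f hp0 hf h1 h2 h3 h4 h5
    have hV0 : 0 ≤ V s t := ENNReal.toReal_nonneg
    gcongr
    calc |f v - f u| ^ α ≤ (V s t ^ (1 / p)) ^ α := by gcongr
      _ = V s t ^ (α / p) := by rw [← Real.rpow_mul hV0]; congr 1; ring
  have hxinc : ∀ s u v t, a ≤ s → s ≤ u → u ≤ v → v ≤ t → t ≤ b →
      |x v - x u| ≤ U s t ^ (1 / p) := by
    intro s u v t h1 h2 h3 h4 h5
    exact pVar_incr x hp0 hx h1 h2 h3 h4 h5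
  have hgood : ∀ s t, a ≤ s → s ≤ t → t ≤ b →
      Good g x s t (C₀ * K * (U s t ^ (1 / p) * V s t ^ (α / p))) := by
    intro s t h1 h2 h3
    refine good_prod hβ0 hγ0 hθ hC₀ hK h2 (hU.restrict h1 h3) (hV.restrict h1 h3) ?_
    intro u v w k1 k2 k3 k4
    have e1 := hginc u u v w (h1.trans k1) le_rfl k2 k3 (k4.trans h3)
    have e2 := hxinc u v w w (h1.trans k1) k2 k3 le_rfl (k4.trans h3)
    have hV0 : 0 ≤ V u w := ENNReal.toReal_nonneg
    calc |g v - g u| * |x w - x v| ≤ (K * V u w ^ (α / p)) * U u w ^ (1 / p) := by gcongr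
      _ = _ := by ring
  obtain ⟨I, hIa, hI⟩ := sewing g x a b hab.le (fun t ht => ⟨_, hgood a t le_rfl ht.1 ht.2⟩)
  refine ⟨fun t => y₀ + I t, ?_, ?_⟩
  · -- Riemann-Stieltjes integrability
    intro t ht ε hε
    simp only [add_sub_cancel_left]
    set r : ℝ := ((1 - α / p) + 1 / p) / 2 with hr
    have hαp : α / p < 1 := by rw [div_lt_one hp0]; linarith
    have hr0 : 0 < r := by linarith
    have hr1 : r < 1 / p := by linarith
    have hθ' : 1 < r + α / p := by linarith
    set C₁ : ℝ := 2 / (1 - (2:ℝ) ^ (1 - (r + α / p))) with hC₁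
    have hC₁pos : 0 < C₁ := young_const_pos hθ'
    have hc : 0 < 1 - r * p := by
      rw [lt_div_iff₀ hp0] at hr1; linarith
    have hctrl := ctrl_prod_pow hU hV hr0 hγ0 hθ'.le
    obtain ⟨η, hη, hηε⟩ := exists_small (D := (C₁ + 1) * K * (U a b ^ r * V a b ^ (α / p))) hc hε
    obtain ⟨δ, hδ, hδx⟩ := Metric.uniformContinuousOn_iff.1
      (isCompact_Icc.uniformContinuousOn_of_continuous hxc) η hη
    refine ⟨δ, hδ, ?_⟩
    intro n τ ξ hτ hτ0 hτn hξ hmesh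
    have hxs : ∀ s v w t, a ≤ s → s ≤ v → v ≤ w → w ≤ t → t ≤ b → t - s < δ →
        |x w - x v| ≤ η ^ (1 - r * p) * U s t ^ r := by
      intro s v w t h1 h2 h3 h4 h5 h6
      have e1 := hxinc s v w t h1 h2 h3 h4 h5
      have hU0 : 0 ≤ U s t := ENNReal.toReal_nonneg
      have e2 : |x w - x v| ≤ η := by
        have := hδx w ⟨by linarith, by linarith⟩ v ⟨by linarith, by linarith⟩
          (by rw [Real.dist_eq, abs_of_nonneg (by linarith)]; linarith)
        rw [Real.dist_eq] at this
        exact this.le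
      have e3 : |x w - x v| = |x w - x v| ^ (1 - r * p) * |x w - x v| ^ (r * p) := by
        rw [← Real.rpow_add_of_nonneg (abs_nonneg _) hc.le (by positivity)]
        simp
      rw [e3]
      calc _ ≤ η ^ (1 - r * p) * (U s t ^ (1 / p)) ^ (r * p) := by gcongr
        _ = _ := by
          rw [← Real.rpow_mul hU0]; congr 2; field_simp
    have hmemτ : ∀ i, τ i ∈ Set.Icc a b := fun i =>
      ⟨hτ0 ▸ hτ.monotone (Fin.zero_le _), (hτn ▸ hτ.monotone (Fin.le_last _) : τ i ≤ t).trans ht.2⟩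
    have hterm : ∀ i : Fin n, |g (ξ i) * (x (τ i.succ) - x (τ i.castSucc)) -
        (I (τ i.succ) - I (τ i.castSucc))| ≤ η ^ (1 - r * p) * ((C₁ + 1) * K) *
          (U (τ i.castSucc) (τ i.succ) ^ r * V (τ i.castSucc) (τ i.succ) ^ (α / p)) := by
      intro i
      have hle : τ i.castSucc ≤ τ i.succ := (hξ i).1.trans (hξ i).2
      have hs1 := (hmemτ i.castSucc).1
      have ht1 := (hmemτ i.succ).2
      have hm := hmesh i
      set s := τ i.castSucc
      set w := τ i.succ
      have hV0 : 0 ≤ V s w := ENNReal.toReal_nonneg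
      have hU0 : 0 ≤ U s w := ENNReal.toReal_nonneg
      have hg1 : Good g x s w (C₁ * (K * η ^ (1 - r * p)) * (U s w ^ r * V s w ^ (α / p))) := by
        refine good_prod hr0 hγ0 hθ' hC₁ (by positivity) hle (hU.restrict hs1 ht1)
          (hV.restrict hs1 ht1) ?_
        intro u v z k1 k2 k3 k4
        have e1 := hginc u u v z (hs1.trans k1) le_rfl k2 k3 (k4.trans ht1)
        have e2 := hxs u v z z (hs1.trans k1) k2 k3 le_rfl (k4.trans ht1) (by linarith)
        have hV0 : 0 ≤ V u z := ENNReal.toReal_nonneg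
        calc |g v - g u| * |x z - x v|
            ≤ (K * V u z ^ (α / p)) * (η ^ (1 - r * p) * U u z ^ r) := by gcongr
          _ = _ := by ring
      have e0 := hI s (hmemτ _) w (hmemτ _) hle _ hg1
      have e1 := hginc s s (ξ i) w hs1 le_rfl (hξ i).1 (hξ i).2 ht1
      have e2 := hxs s s w w hs1 le_rfl hle le_rfl ht1 hm
      have e3 : |(g (ξ i) - g s) * (x w - x s)| ≤
          (K * V s w ^ (α / p)) * (η ^ (1 - r * p) * U s w ^ r) := by
        rw [abs_mul]; gcongr
      have e4 : g (ξ i) * (x w - x s) - (I w - I s) =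
          (g (ξ i) - g s) * (x w - x s) - (I w - I s - g s * (x w - x s)) := by ring
      rw [e4]
      refine (abs_sub _ _).trans ((add_le_add e3 e0).trans (le_of_eq ?_))
      ring
    have htel : ∑ i : Fin n, (I (τ i.succ) - I (τ i.castSucc)) = I t := by
      have h1 := Fin.sum_univ_succ (fun i => I (τ i))
      have h2 := Fin.sum_univ_castSucc (fun i => I (τ i))
      rw [Finset.sum_sub_distrib]
      rw [hτ0, hIa] at h1
      rw [hτn] at h2
      linarith
    rw [← htel, ← Finset.sum_sub_distrib]
    refine lt_of_le_of_lt ?_ hηε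
    calc _ ≤ ∑ i : Fin n, |g (ξ i) * (x (τ i.succ) - x (τ i.castSucc)) -
        (I (τ i.succ) - I (τ i.castSucc))| := Finset.abs_sum_le_sum_abs _ _
      _ ≤ ∑ i : Fin n, η ^ (1 - r * p) * ((C₁ + 1) * K) *
          (U (τ i.castSucc) (τ i.succ) ^ r * V (τ i.castSucc) (τ i.succ) ^ (α / p)) :=
          Finset.sum_le_sum fun i _ => hterm i
      _ = η ^ (1 - r * p) * ((C₁ + 1) * K) * ∑ i : Fin n,
          (U (τ i.castSucc) (τ i.succ) ^ r * V (τ i.castSucc) (τ i.succ) ^ (α / p)) := by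
          rw [Finset.mul_sum]
      _ ≤ η ^ (1 - r * p) * ((C₁ + 1) * K) * (U a b ^ r * V a b ^ (α / p)) := by
          have h1 := hctrl.sum_le n τ hτ.monotone hmemτ
          have h2 := hctrl.mono le_rfl (hmemτ 0).1 (hτ.monotone (Fin.zero_le (Fin.last n)))
            (hmemτ (Fin.last n)).2 le_rfl
          exact mul_le_mul_of_nonneg_left (h1.trans h2) (by positivity)
      _ = _ := by ring
  · -- the estimate
    set N : ℝ := |f a| + pVarNorm f p a b with hN
    have hVab : 0 ≤ V a b := ENNReal.toReal_nonneg
    have hUab : 0 ≤ U a b := ENNReal.toReal_nonneg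
    have hnf : 0 ≤ pVarNorm f p a b := Real.rpow_nonneg hVab _
    have hN0 : 0 ≤ N := by positivity
    set A : ℝ := (C₀ + 1) * K * N ^ α + |F 0| with hA
    have hA0 : 0 ≤ A := by positivity
    have hsup : ∀ s ∈ Set.Icc a b, |g s| ≤ |F 0| + K * N ^ α := by
      intro s hs
      have h1 := hF (f s) 0
      have h2 : |f s| ≤ N := by
        have := pVar_incr f hp0 hf le_rfl le_rfl hs.1 hs.2 le_rfl
        have h3 : |f s| ≤ |f a| + |f s - f a| := by
          have := abs_add_le (f a) (f s - f a)
          simpa using this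
        exact h3.trans (add_le_add le_rfl this)
      have h3 : |g s| ≤ |F 0| + |F (f s) - F 0| := by
        have := abs_add_le (F 0) (F (f s) - F 0)
        simpa using this
      rw [sub_zero] at h1
      refine h3.trans (add_le_add le_rfl (h1.trans ?_))
      gcongr
    have hinc : ∀ s t, a ≤ s → s ≤ t → t ≤ b → |I t - I s| ≤ A * U s t ^ (1 / p) := by
      intro s t h1 h2 h3
      have hUst : 0 ≤ U s t := ENNReal.toReal_nonneg
      have hVst : 0 ≤ V s t := ENNReal.toReal_nonneg
      have e1 := hI s ⟨h1, h2.trans h3⟩ t ⟨h1.trans h2, h3⟩ h2 _ (hgood s t h1 h2 h3)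
      have e2 := hsup s ⟨h1, h2.trans h3⟩
      have e3 := hxinc s s t t h1 le_rfl h2 le_rfl h3
      have e4 : V s t ^ (α / p) ≤ N ^ α := by
        have : V s t ≤ V a b := hV.mono le_rfl h1 h2 h3 le_rfl
        calc V s t ^ (α / p) ≤ V a b ^ (α / p) := by gcongr
          _ = (V a b ^ (1 / p)) ^ α := by rw [← Real.rpow_mul hVab]; congr 1; ring
          _ ≤ N ^ α := by
            have : V a b ^ (1 / p) ≤ N := by
              have := abs_nonneg (f a)
              show pVarNorm f p a b ≤ N
              linarith
            gcongr
      have e5 : |g s * (x t - x s)| ≤ (|F 0| + K * N ^ α) * U s t ^ (1 / p) := by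
        rw [abs_mul]; gcongr
      have e6 : C₀ * K * (U s t ^ (1 / p) * V s t ^ (α / p)) ≤
          C₀ * K * (U s t ^ (1 / p) * N ^ α) := by gcongr
      have e7 : |I t - I s| ≤ |I t - I s - g s * (x t - x s)| + |g s * (x t - x s)| := by
        have := abs_add_le (I t - I s - g s * (x t - x s)) (g s * (x t - x s))
        simpa using this
      calc _ ≤ C₀ * K * (U s t ^ (1 / p) * N ^ α) + (|F 0| + K * N ^ α) * U s t ^ (1 / p) := by
            linarith
        _ = _ := by rw [hA]; ring
    have hpv : pVar (fun t => y₀ + I t) p a b ≤ ENNReal.ofReal (A ^ p * U a b) := by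
      refine iSup₂_le fun n τ => iSup₂_le fun hτ hm => ?_
      rw [← ENNReal.ofReal_sum_of_nonneg (fun i _ => by positivity)]
      apply ENNReal.ofReal_le_ofReal
      have h1 := hU.sum_le n τ hτ.monotone hm
      have h2 := hU.mono le_rfl (hm 0).1 (hτ.monotone (Fin.zero_le (Fin.last n)))
            (hm (Fin.last n)).2 le_rfl
      calc _ ≤ ∑ i : Fin n, A ^ p * U (τ i.castSucc) (τ i.succ) := by
            refine Finset.sum_le_sum fun i _ => ?_
            have hle : τ i.castSucc ≤ τ i.succ := hτ.monotone (Fin.castSucc_lt_succ).le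
            have h3 := hinc _ _ (hm i.castSucc).1 hle (hm i.succ).2
            have hU0 : 0 ≤ U (τ i.castSucc) (τ i.succ) := ENNReal.toReal_nonneg
            rw [add_sub_add_left_eq_sub]
            calc _ ≤ (A * U (τ i.castSucc) (τ i.succ) ^ (1 / p)) ^ p := by gcongr
              _ = _ := by
                rw [Real.mul_rpow hA0 (by positivity), one_div, Real.rpow_inv_rpow hU0 hp0.ne']
        _ = A ^ p * ∑ i : Fin n, U (τ i.castSucc) (τ i.succ) := by rw [Finset.mul_sum]
        _ ≤ A ^ p * U a b := mul_le_mul_of_nonneg_left (h1.trans h2) (by positivity)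
    refine ⟨hpv.trans_lt ENNReal.ofReal_lt_top, ?_⟩
    have hnorm : pVarNorm (fun t => y₀ + I t) p a b ≤ A * pVarNorm x p a b := by
      have h1 : (pVar (fun t => y₀ + I t) p a b).toReal ≤ A ^ p * U a b :=
        ENNReal.toReal_le_of_le_ofReal (by positivity) hpv
      have h0 : 0 ≤ (pVar (fun t => y₀ + I t) p a b).toReal := ENNReal.toReal_nonneg
      calc pVarNorm (fun t => y₀ + I t) p a b ≤ (A ^ p * U a b) ^ (1 / p) := by
            unfold pVarNorm; gcongr
        _ = A * pVarNorm x p a b := by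
            rw [Real.mul_rpow (by positivity) hUab, one_div, Real.rpow_rpow_inv hA0 hp0.ne']
            simp only [pVarNorm, one_div, hUdef]
    simp only [hIa, add_zero]
    calc |y₀| + pVarNorm (fun t => y₀ + I t) p a b ≤ |y₀| + A * pVarNorm x p a b := by linarith
      _ = _ := by rw [hA]; ring
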